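/- Let k be an integer with k ≥ 1, and let Δ′ ≥ 0 and ε > 0 satisfy kε ≥ 2(ε + Δ′). Let x, y ∈ ℝ with |x − y| ≤ Δ′. Let z̃ be the stochastic rounding of x/ε (an integer-valued random variable supported on {⌊x/ε⌋, ⌈x/ε⌉} with E[z̃] = x/ε), set w = z̃ mod k, and let Q_M(x,y) = (ẑk + w)·ε where ẑ minimizes |(zk + w)·ε − y| over z ∈ ℤ. Then Q_M(x,y) = z̃ε almost surely; consequently E[Q_M(x,y)] = x and |Q_M(x,y) − x| ≤ ε almost surely. In particular, for k > 2 and ε = 2Δ′/(k−2), one has |Q_M(x,y) − x| ≤ 2Δ′/(k−2) almost surely. -/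

import Mathlib

open MeasureTheory

/-!
The decoder searches a coset of the lattice `kεℤ` that contains the rounded input `z̃ε`. Since
`|z̃ε - y| < ε + Δ' ≤ kε / 2`, the reconstruction nearest to `y` also lies within `kε / 2` of `y`,
hence within `kε` of `z̃ε`, and two points of the coset that close to each other coincide. So the
decoder recovers `z̃ε` exactly, and the quantizer inherits the mean and the error of the rounding.
-/

namespace ModuloQuantizer

theorem abs_intCast_sub_lt_one_of_eq_floor_or_eq_ceil {R : Type*} [Ring R] [LinearOrder R]
    [IsStrictOrderedRing R] [FloorRing R] {n : ℤ} {r : R} (hn : n = ⌊r⌋ ∨ n = ⌈r⌉) :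
    |(n : R) - r| < 1 := by
  rcases hn with rfl | rfl
  · rw [abs_sub_comm, Int.self_sub_floor, Int.abs_fract]
    exact Int.fract_lt_one r
  · rw [abs_of_nonneg (sub_nonneg.mpr (Int.le_ceil r)), sub_lt_iff_lt_add']
    exact Int.ceil_lt_add_one r

theorem abs_intCast_mul_sub_lt_of_eq_floor_or_eq_ceil {K : Type*} [Field K] [LinearOrder K]
    [IsStrictOrderedRing K] [FloorRing K] {n : ℤ} {ε x : K} (hε : 0 < ε)
    (hn : n = ⌊x / ε⌋ ∨ n = ⌈x / ε⌉) : |(n : K) * ε - x| < ε :=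
  calc |(n : K) * ε - x| = |((n : K) - x / ε) * ε| := by rw [sub_mul, div_mul_cancel₀ x hε.ne']
    _ = |(n : K) - x / ε| * ε := by rw [abs_mul, abs_of_pos hε]
    _ < ε := mul_lt_of_lt_one_left hε (abs_intCast_sub_lt_one_of_eq_floor_or_eq_ceil hn)

/-- The reconstruction `(zk + w)ε` with index `z`; for fixed `w` these are the candidate outputs of
a decoder that has received the residue `w` modulo `k`. -/
def reconstruction {R : Type*} [Ring R] (k : ℤ) (ε : R) (w z : ℤ) : R :=
  ((z * k + w : ℤ) : R) * ε

theorem reconstruction_emod_ediv {R : Type*} [Ring R] (k : ℤ) (ε : R) (n : ℤ) :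
    reconstruction k ε (n % k) (n / k) = n * ε := by
  rw [reconstruction, Int.ediv_mul_add_emod]

/-- The index `z` minimizes the distance from the reconstruction to the side information `y`.
Minimizers need not be unique, so the decoder's choice is a predicate rather than a function. -/
def IsNearestIndex {R : Type*} [Ring R] [LinearOrder R] (k : ℤ) (ε y : R) (w z : ℤ) :
    Prop :=
  ∀ z', |reconstruction k ε w z - y| ≤ |reconstruction k ε w z' - y|

variable {R : Type*} [Ring R] [LinearOrder R] [IsStrictOrderedRing R] {k m n : ℤ} {ε y : R}

theorem eq_of_modEq_of_abs_mul_sub_lt (hε : 0 < ε) (hmn : m ≡ n [ZMOD k])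
    (hlt : |(m : R) * ε - n * ε| < k * ε) : m = n := by
  have hlt' : |m - n| < k := by
    rw [← sub_mul, abs_mul, abs_of_pos hε, mul_lt_mul_iff_left₀ hε] at hlt
    exact_mod_cast hlt
  exact sub_eq_zero.mp (Int.eq_zero_of_abs_lt_dvd hmn.symm.dvd hlt')

theorem IsNearestIndex.reconstruction_eq {z : ℤ} (hz : IsNearestIndex k ε y (n % k) z)
    (hε : 0 < ε) (hn : 2 * |(n : R) * ε - y| < k * ε) :
    reconstruction k ε (n % k) z = n * ε := by
  have hmod : z * k + n % k ≡ n [ZMOD k] := by simp [Int.ModEq]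
  have hnearest : |reconstruction k ε (n % k) z - y| ≤ |(n : R) * ε - y| :=
    reconstruction_emod_ediv k ε n ▸ hz (n / k)
  have hlt : |reconstruction k ε (n % k) z - n * ε| < k * ε :=
    calc |reconstruction k ε (n % k) z - n * ε|
        ≤ |reconstruction k ε (n % k) z - y| + |y - n * ε| := abs_sub_le _ _ _
      _ ≤ 2 * |(n : R) * ε - y| := by rw [abs_sub_comm y, two_mul]; gcongr
      _ < k * ε := hn
  rw [reconstruction, eq_of_modEq_of_abs_mul_sub_lt hε hmod hlt]

end ModuloQuantizer

open ModuloQuantizer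

theorem stmt_3_general {Ω : Type*} [MeasurableSpace Ω] {μ : Measure Ω} {k : ℤ} {Δ' ε x : ℝ}
    {y : Ω → ℝ} {zt zh : Ω → ℤ} (hε : 0 < ε) (hkε : 2 * (ε + Δ') ≤ k * ε)
    (hxy : ∀ᵐ ω ∂μ, |x - y ω| ≤ Δ')
    (hsupp : ∀ᵐ ω ∂μ, zt ω = ⌊x / ε⌋ ∨ zt ω = ⌈x / ε⌉)
    (hunbiased : (∫ ω, (zt ω : ℝ) ∂μ) = x / ε)
    (hnearest : ∀ᵐ ω ∂μ, IsNearestIndex k ε (y ω) (zt ω % k) (zh ω)) :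
    (∀ᵐ ω ∂μ, reconstruction k ε (zt ω % k) (zh ω) = zt ω * ε) ∧
    ((∫ ω, reconstruction k ε (zt ω % k) (zh ω) ∂μ) = x) ∧
    (∀ᵐ ω ∂μ, |reconstruction k ε (zt ω % k) (zh ω) - x| < ε) := by
  have hround : ∀ᵐ ω ∂μ, |(zt ω : ℝ) * ε - x| < ε :=
    hsupp.mono fun ω hω => abs_intCast_mul_sub_lt_of_eq_floor_or_eq_ceil hε hω
  have hexact : ∀ᵐ ω ∂μ, reconstruction k ε (zt ω % k) (zh ω) = zt ω * ε := by
    filter_upwards [hround, hxy, hnearest] with ω hround hxy hnearest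
    refine hnearest.reconstruction_eq hε ?_
    linarith [abs_sub_le ((zt ω : ℝ) * ε) x (y ω)]
  refine ⟨hexact, ?_, ?_⟩
  · rw [integral_congr_ae hexact, integral_mul_const, hunbiased, div_mul_cancel₀ x hε.ne']
  · filter_upwards [hround, hexact] with ω hround hexact
    rwa [hexact]

/-- Guarantee for the Modulo Quantizer.  Let `k ≥ 1`, `Δ' ≥ 0`, `ε > 0` with
`kε ≥ 2(ε + Δ')`, and `x, y ∈ ℝ` with `|x − y| ≤ Δ'`.  Let `z̃` be the stochastic rounding of
`x/ε` (an integer-valued random variable supported on `{⌊x/ε⌋, ⌈x/ε⌉}` with `E[z̃] = x/ε`),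
`w = z̃ mod k`, and let the decoded output be `Q_M(x,y) = (ẑk + w)·ε` where `ẑ` minimizes
`|(zk + w)·ε − y|` over `z ∈ ℤ`.  Then `Q_M(x,y) = z̃ε` a.s.; consequently `E[Q_M(x,y)] = x`
and `|Q_M(x,y) − x| ≤ ε` a.s.  In particular, for `k > 2` and `ε = 2Δ'/(k−2)` one has
`|Q_M(x,y) − x| ≤ 2Δ'/(k−2)` a.s. -/
theorem stmt_3 {Ω : Type*} [MeasurableSpace Ω] (μ : Measure Ω) [IsProbabilityMeasure μ]
    (k : ℕ) (hk : 1 ≤ k) (Δ' ε : ℝ) (hΔ' : 0 ≤ Δ') (hε : 0 < ε)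
    (hkε : (k : ℝ) * ε ≥ 2 * (ε + Δ'))
    (x y : ℝ) (hxy : |x - y| ≤ Δ')
    (zt : Ω → ℤ) (hztmeas : Measurable zt)
    (hsupp : ∀ᵐ ω ∂μ, zt ω = ⌊x / ε⌋ ∨ zt ω = ⌈x / ε⌉)
    (hunbiased : (∫ ω, (zt ω : ℝ) ∂μ) = x / ε)
    (zh : Ω → ℤ) (hzhmeas : Measurable zh)
    (hargmin : ∀ ω, ∀ z : ℤ,
      |((zh ω * k + zt ω % k : ℤ) : ℝ) * ε - y| ≤ |((z * k + zt ω % k : ℤ) : ℝ) * ε - y|) :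
    (∀ᵐ ω ∂μ, ((zh ω * k + zt ω % k : ℤ) : ℝ) * ε = (zt ω : ℝ) * ε) ∧
    ((∫ ω, ((zh ω * k + zt ω % k : ℤ) : ℝ) * ε ∂μ) = x) ∧
    (∀ᵐ ω ∂μ, |((zh ω * k + zt ω % k : ℤ) : ℝ) * ε - x| ≤ ε) ∧
    (2 < k → ε = 2 * Δ' / ((k : ℝ) - 2) →
      ∀ᵐ ω ∂μ, |((zh ω * k + zt ω % k : ℤ) : ℝ) * ε - x| ≤ 2 * Δ' / ((k : ℝ) - 2)) := by
  obtain ⟨hexact, hmean, herror⟩ := stmt_3_general (k := k) hε (mod_cast hkε)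
    (.of_forall fun _ => hxy) hsupp hunbiased (.of_forall hargmin)
  have herror_le := herror.mono fun _ => le_of_lt
  exact ⟨hexact, hmean, herror_le, fun _ hε_eq => hε_eq ▸ herror_le⟩
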